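/- arXiv:1012.2149 — 2 statements merged into one kernel-verified Lean document; each statement's English description precedes it below -/
import Mathlib

section
/- Fix ε₀ ∈ (0,x₀) and η₀ ∈ [0,ε₀). Define ε_k recursively as the unique point of (0,ε₀) with T(ε_k) = ε_{k−1}, and η_k analogously from η₀. Then: ε_k → 0 as k → ∞; the sequence (ε_k − ε_{k+1}) is decreasing; there is a constant C such that ε_k − ε_{k+1} ≤ C·ε_k^{1+α} for all k; and (ε_k − η_k)/ε_k → 0 as k → ∞, i.e. lim_{k→∞} η_k/ε_k = 1. Consequently, the probability measures on [0,ε₀] with densities given by the normalized conditional push-forwards (P̃_{[0,ε₀]})^k χ_{[0,ε₀]} converge weakly to the Dirac measure δ₀ at 0. -/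
/-!
Since `T x = x + O(x^{1+α})`, a backward orbit `u` of the left branch decreases to the only fixed
point `0`, and `T x ~ x` gives `u (k+m) ~ u k` for every fixed `m`. Two backward orbits interlace up
to a shift of the index, hence they are all asymptotically equivalent.

For the conditioned densities, put `A = [0, ε₀]`. As `T⁻¹[0, ε_m] ∩ A = [0, ε_{m+1}]`, each
application of `P_A` trades the mass of `[0, ε_m]` for that of `[0, ε_{m+1}]`, and after
normalization the `k`-th measure gives `[0, ε_m]` the mass `ε_{k+m} / ε_k → 1`. All mass therefore
escapes to `0`.
-/

open MeasureTheory Set Filter Topology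
open scoped Classical

/-- The standing hypotheses on the Pomeau–Manneville map `T` with exponent
`α ∈ (0,1)` and breakpoint `x₀ ∈ (0,1)`: near `0`,
`T x = x + c_α x^{1+α} + g x` with `g` of class `C²` and `g' = o(x^α)`; `T`
maps each of `(0,x₀)` and `(x₀,1)` bijectively onto `(0,1)`, is `C²` on
`(x₀,1)` and on `(ε,x₀)` for every `ε > 0`, and `T' > 1` off the breakpoint. -/
structure PMHyp (T : ℝ → ℝ) (x₀ α : ℝ) : Prop where
  αmem : α ∈ Set.Ioo (0:ℝ) 1
  x₀mem : x₀ ∈ Set.Ioo (0:ℝ) 1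
  T0 : T 0 = 0
  mapsI : Set.MapsTo T (Set.Icc 0 1) (Set.Icc 0 1)
  branch1 : Set.BijOn T (Set.Ioo 0 x₀) (Set.Ioo 0 1)
  branch2 : Set.BijOn T (Set.Ioo x₀ 1) (Set.Ioo 0 1)
  form : ∃ cα : ℝ, 0 < cα ∧ ∃ g : ℝ → ℝ, ∃ δ : ℝ, 0 < δ ∧
    (∀ x ∈ Set.Ico (0:ℝ) δ, T x = x + cα * x ^ (1+α) + g x) ∧
    ContDiffOn ℝ 2 g (Set.Ioo 0 δ) ∧
    Filter.Tendsto (fun x => deriv g x / x ^ α) (nhdsWithin 0 (Set.Ioi 0)) (nhds 0)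
  smooth2 : ContDiffOn ℝ 2 T (Set.Ioo x₀ 1)
  smooth1 : ∀ ε : ℝ, 0 < ε → ContDiffOn ℝ 2 T (Set.Ioo ε x₀)
  expand : ∀ x ∈ Set.Ioo 0 x₀ ∪ Set.Ioo x₀ 1, 1 < deriv T x

/-- `PT` is the Perron–Frobenius (transfer) operator of `T` on
`L¹([0,1], Leb)`: for integrable `φ` and measurable `A ⊆ [0,1]`,
`∫_A PT φ = ∫_{T⁻¹A ∩ [0,1]} φ`. -/
def IsPFT (T : ℝ → ℝ) (PT : (ℝ → ℝ) → ℝ → ℝ) : Prop :=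
  ∀ φ : ℝ → ℝ, MeasureTheory.IntegrableOn φ (Set.Icc 0 1) →
    MeasureTheory.IntegrableOn (PT φ) (Set.Icc 0 1) ∧
    ∀ A ⊆ Set.Icc (0:ℝ) 1, MeasurableSet A →
      ∫ z in A, PT φ z = ∫ z in T ⁻¹' A ∩ Set.Icc 0 1, φ z

/-- The averaging operator `A^ε` determined by the density `ρ` on `[0,ε₀)`:
`(A^ε f)(z) = ρ(z) ∫₀^{ε₀} f` for `z ∈ [0,ε₀)` and `(A^ε f)(z) = f(z)`
otherwise. -/
noncomputable def Aop (ρ : ℝ → ℝ) (e0 : ℝ) (f : ℝ → ℝ) : ℝ → ℝ :=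
  fun z => if z ∈ Set.Ico (0:ℝ) e0 then ρ z * ∫ y in Set.Ico (0:ℝ) e0, f y else f z

/-- The conditional Perron–Frobenius operator with respect to the set `A`:
`P_A φ = χ_A ⬝ P_T(φ ⬝ χ_A)`. -/
noncomputable def condPF1 (PT : (ℝ → ℝ) → ℝ → ℝ) (A : Set ℝ) (φ : ℝ → ℝ) :
    ℝ → ℝ :=
  A.indicator (PT (A.indicator φ))

open Asymptotics

/-! ### Backward orbits -/

/-- A backward orbit of `T` inside `s`: a sequence in `s` each of whose terms is the image under `T`
of the next one. The `ε_k` and `η_k` of the paper are such orbits of the left branch. -/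
structure IsBackwardOrbitOn {X : Type*} (T : X → X) (s : Set X) (u : ℕ → X) : Prop where
  mem : ∀ k, u k ∈ s
  map_succ : ∀ k, T (u (k + 1)) = u k

namespace IsBackwardOrbitOn

lemma of_succ {X : Type*} {T : X → X} {s : Set X} {u : ℕ → X} (h0 : u 0 ∈ s)
    (hsucc : ∀ k, u (k + 1) ∈ s ∧ T (u (k + 1)) = u k) : IsBackwardOrbitOn T s u where
  mem
    | 0 => h0
    | k + 1 => (hsucc k).1
  map_succ k := (hsucc k).2

lemma shift {X : Type*} {T : X → X} {s : Set X} {u : ℕ → X} (hu : IsBackwardOrbitOn T s u)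
    (m : ℕ) : IsBackwardOrbitOn T s fun k => u (k + m) where
  mem k := hu.mem (k + m)
  map_succ k := by rw [add_right_comm, hu.map_succ]

lemma antitone {X : Type*} [Preorder X] {T : X → X} {s : Set X} {u : ℕ → X}
    (hu : IsBackwardOrbitOn T s u) (hT : ∀ x ∈ s, x ≤ T x) : Antitone u :=
  antitone_nat_of_succ_le fun k => (hT _ (hu.mem (k + 1))).trans_eq (hu.map_succ k)

lemma le_of_zero_le {X : Type*} [LinearOrder X] {T : X → X} {s : Set X} {u v : ℕ → X}
    (hu : IsBackwardOrbitOn T s u) (hv : IsBackwardOrbitOn T s v) (hT : StrictMonoOn T s)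
    (h0 : u 0 ≤ v 0) (k : ℕ) : u k ≤ v k := by
  induction k with
  | zero => exact h0
  | succ k ih =>
    rw [← hu.map_succ, ← hv.map_succ] at ih
    exact (hT.le_iff_le (hu.mem _) (hv.mem _)).1 ih

lemma antitone_sub_succ {X : Type*} [Preorder X] [Sub X] {T : X → X} {s : Set X} {u : ℕ → X}
    (hu : IsBackwardOrbitOn T s u) (hT : MonotoneOn (fun x => T x - x) s) (h_anti : Antitone u) :
    Antitone fun k => u k - u (k + 1) :=
  antitone_nat_of_succ_le fun k => by
    simpa only [hu.map_succ] using
      hT (hu.mem (k + 2)) (hu.mem (k + 1)) (h_anti (Nat.le_succ (k + 1)))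

lemma tendsto_left {X : Type*} [ConditionallyCompleteLinearOrder X] [TopologicalSpace X]
    [OrderTopology X] {T : X → X} {a b : X} {u : ℕ → X} (hu : IsBackwardOrbitOn T (Ioo a b) u)
    (hcont : ContinuousOn T (Ioo a b)) (hT : ∀ x ∈ Ioo a b, x < T x) :
    Tendsto u atTop (𝓝 a) := by
  have h_anti := hu.antitone fun x hx => (hT x hx).le
  have h_bdd : BddBelow (range u) := ⟨a, forall_mem_range.2 fun k => (hu.mem k).1.le⟩
  have h_lim := tendsto_atTop_ciInf h_anti h_bdd
  set L := ⨅ k, u k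
  have haL : a ≤ L := le_ciInf fun k => (hu.mem k).1.le
  have hLb : L < b := (ciInf_le h_bdd 0).trans_lt (hu.mem 0).2
  suffices L = a by rwa [this] at h_lim
  by_contra hne
  have hL : L ∈ Ioo a b := ⟨haL.lt_of_ne' hne, hLb⟩
  have h_image : Tendsto (fun k => T (u (k + 1))) atTop (𝓝 (T L)) :=
    (hcont.continuousAt (Ioo_mem_nhds hL.1 hL.2)).tendsto.comp
      (h_lim.comp (tendsto_add_atTop_nat 1))
  simp only [hu.map_succ] at h_image
  exact (hT L hL).ne (tendsto_nhds_unique h_lim h_image)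

lemma isEquivalent_shift {E : Type*} [NormedAddCommGroup E] {T : E → E} {s : Set E} {u : ℕ → E}
    {l : Filter E} (hu : IsBackwardOrbitOn T s u) (h_lim : Tendsto u atTop l) (hT : T ~[l] id)
    (m : ℕ) : (fun k => u (k + m)) ~[atTop] u := by
  induction m with
  | zero => exact IsEquivalent.refl
  | succ m ih =>
    have h_step : (fun k => T (u (k + m + 1))) ~[atTop] fun k => u (k + m + 1) :=
      hT.comp_tendsto (h_lim.comp (tendsto_add_atTop_nat (m + 1)))
    simp only [hu.map_succ] at h_step
    exact h_step.symm.trans ih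

section Real

variable {T : ℝ → ℝ} {b : ℝ} {u v : ℕ → ℝ}

lemma tendsto_nhdsGT (hu : IsBackwardOrbitOn T (Ioo 0 b) u) (h_lim : Tendsto u atTop (𝓝 0)) :
    Tendsto u atTop (𝓝[>] 0) :=
  tendsto_nhdsWithin_iff.2 ⟨h_lim, Eventually.of_forall fun k => (hu.mem k).1⟩

lemma isEquivalent_of_zero_le (hu : IsBackwardOrbitOn T (Ioo 0 b) u)
    (hv : IsBackwardOrbitOn T (Ioo 0 b) v) (h_mono : StrictMonoOn T (Ioo 0 b))
    (h_lim : Tendsto v atTop (𝓝 0)) (hT : T ~[𝓝[>] 0] id) (h0 : u 0 ≤ v 0) :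
    u ~[atTop] v := by
  obtain ⟨m, hm⟩ := (h_lim.eventually (gt_mem_nhds (hu.mem 0).1)).exists
  have h_lower : ∀ k, v (k + m) ≤ u k :=
    (hv.shift m).le_of_zero_le hu h_mono (by simpa only [zero_add] using hm.le)
  have h_upper : ∀ k, u k ≤ v k := hu.le_of_zero_le hv h_mono h0
  have h_shift : Tendsto (fun k => v (k + m) / v k) atTop (𝓝 1) :=
    (isEquivalent_iff_tendsto_one (Eventually.of_forall fun k => (hv.mem k).1.ne')).1
      (hv.isEquivalent_shift (hv.tendsto_nhdsGT h_lim) hT m)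
  exact isEquivalent_of_tendsto_one <| tendsto_of_tendsto_of_tendsto_of_le_of_le h_shift
    tendsto_const_nhds (fun k => div_le_div_of_nonneg_right (h_lower k) (hv.mem k).1.le)
    fun k => div_le_one_of_le₀ (h_upper k) (hv.mem k).1.le

lemma isEquivalent (hu : IsBackwardOrbitOn T (Ioo 0 b) u)
    (hv : IsBackwardOrbitOn T (Ioo 0 b) v) (h_mono : StrictMonoOn T (Ioo 0 b))
    (hu_lim : Tendsto u atTop (𝓝 0)) (hv_lim : Tendsto v atTop (𝓝 0)) (hT : T ~[𝓝[>] 0] id) :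
    u ~[atTop] v := by
  rcases le_total (u 0) (v 0) with h0 | h0
  · exact hu.isEquivalent_of_zero_le hv h_mono hv_lim hT h0
  · exact (hv.isEquivalent_of_zero_le hu h_mono hu_lim hT h0).symm

lemma exists_sub_succ_le_mul_rpow {p : ℝ} (hu : IsBackwardOrbitOn T (Ioo 0 b) u)
    (h_lim : Tendsto u atTop (𝓝 0)) (h_anti : Antitone u) (hp : 0 ≤ p)
    (hT : (fun x => T x - x) =O[𝓝[>] 0] fun x => x ^ p) :
    ∃ C : ℝ, 0 < C ∧ ∀ k, u k - u (k + 1) ≤ C * u k ^ p := by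
  have h_comp : (fun k => T (u (k + 1)) - u (k + 1)) =O[atTop] fun k => u (k + 1) ^ p :=
    hT.comp_tendsto ((hu.tendsto_nhdsGT h_lim).comp (tendsto_add_atTop_nat 1))
  obtain ⟨C, hC, h_bound⟩ := bound_of_isBigO_nat_atTop h_comp
  refine ⟨C, hC, fun k => ?_⟩
  have h_pos : 0 < u (k + 1) ^ p := Real.rpow_pos_of_pos (hu.mem _).1 p
  calc u k - u (k + 1) = T (u (k + 1)) - u (k + 1) := by rw [hu.map_succ]
    _ ≤ C * ‖u (k + 1) ^ p‖ := (Real.le_norm_self _).trans (h_bound h_pos.ne')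
    _ = C * u (k + 1) ^ p := by rw [Real.norm_of_nonneg h_pos.le]
    _ ≤ C * u k ^ p := by gcongr; exacts [(hu.mem _).1.le, h_anti (Nat.le_succ k)]

lemma of_Ico_of_pos (hu : IsBackwardOrbitOn T (Ico 0 b) u) (hT0 : T 0 = 0) (h0 : 0 < u 0) :
    IsBackwardOrbitOn T (Ioo 0 b) u where
  mem k := by
    refine ⟨?_, (hu.mem k).2⟩
    induction k with
    | zero => exact h0
    | succ k ih =>
      refine (hu.mem (k + 1)).1.lt_of_ne fun h_zero => ih.ne ?_
      rw [← hu.map_succ k, ← h_zero, hT0]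
  map_succ := hu.map_succ

end Real

end IsBackwardOrbitOn

/-! ### Intermittent branches -/

/-- A branch of an interval map on `[0, b)` which is expanding away from the neutral fixed point
`0`, where its order of contact with the identity is at least `1 + α`. This is all that the left
branch of a Pomeau–Manneville map contributes to the asymptotics of backward orbits. -/
structure IsIntermittentBranch (T : ℝ → ℝ) (b α : ℝ) : Prop where
  map_zero : T 0 = 0
  one_lt_deriv : ∀ x ∈ Ioo 0 b, 1 < deriv T x
  sub_id_isBigO : (fun x => T x - x) =O[𝓝[>] 0] fun x => x ^ (1 + α)

lemma differentiableOn_of_one_lt_deriv {T : ℝ → ℝ} {s : Set ℝ} (h : ∀ x ∈ s, 1 < deriv T x) :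
    DifferentiableOn ℝ T s := fun x hx =>
  (differentiableAt_of_deriv_ne_zero (zero_lt_one.trans (h x hx)).ne').differentiableWithinAt

lemma tendsto_rpow_nhdsGT_zero {p : ℝ} (hp : 0 < p) :
    Tendsto (fun x : ℝ => x ^ p) (𝓝[>] 0) (𝓝 0) := by
  have h_cont := (Real.continuousAt_rpow_const 0 p (Or.inr hp.le)).tendsto
  rw [Real.zero_rpow hp.ne'] at h_cont
  exact h_cont.mono_left nhdsWithin_le_nhds

lemma rpow_one_add_isLittleO_id {α : ℝ} (hα : 0 < α) :
    (fun x : ℝ => x ^ (1 + α)) =o[𝓝[>] 0] id := by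
  have h_one := (isLittleO_one_iff ℝ).2 (tendsto_rpow_nhdsGT_zero hα)
  refine (h_one.mul_isBigO (isBigO_refl id _)).congr' ?_ ?_
  · filter_upwards [self_mem_nhdsWithin] with x (hx : 0 < x)
    rw [add_comm, Real.rpow_add_one hx.ne', id]
  · exact Eventually.of_forall fun x => one_mul _

namespace IsIntermittentBranch

variable {T : ℝ → ℝ} {b α : ℝ}

lemma isEquivalent_id (h : IsIntermittentBranch T b α) (hα : 0 < α) : T ~[𝓝[>] 0] id :=
  h.sub_id_isBigO.trans_isLittleO (rpow_one_add_isLittleO_id hα)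

lemma continuousOn (h : IsIntermittentBranch T b α) (hα : 0 < α) : ContinuousOn T (Ico 0 b) := by
  intro x hx
  rcases hx.1.eq_or_lt with rfl | hx0
  · have h_lim : Tendsto T (𝓝[>] 0) (𝓝 (T 0)) := by
      rw [h.map_zero]
      exact (h.isEquivalent_id hα).symm.tendsto_nhds (tendsto_id.mono_left nhdsWithin_le_nhds)
    exact (continuousWithinAt_Ioi_iff_Ici.1 h_lim).mono Ico_subset_Ici_self
  · exact ((differentiableOn_of_one_lt_deriv h.one_lt_deriv).differentiableAt
      (Ioo_mem_nhds hx0 hx.2)).continuousAt.continuousWithinAt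

lemma strictMonoOn_sub_id (h : IsIntermittentBranch T b α) (hα : 0 < α) :
    StrictMonoOn (fun x => T x - x) (Ico 0 b) := by
  refine strictMonoOn_of_deriv_pos (convex_Ico 0 b) ((h.continuousOn hα).sub continuousOn_id) ?_
  intro x hx
  rw [interior_Ico] at hx
  have h_diff := (differentiableOn_of_one_lt_deriv h.one_lt_deriv).differentiableAt
    (Ioo_mem_nhds hx.1 hx.2)
  have h_deriv : HasDerivAt (fun x => T x - x) (deriv T x - 1) x :=
    h_diff.hasDerivAt.sub (hasDerivAt_id' x)
  rw [h_deriv.deriv]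
  exact sub_pos.2 (h.one_lt_deriv x hx)

lemma strictMonoOn (h : IsIntermittentBranch T b α) (hα : 0 < α) : StrictMonoOn T (Ico 0 b) := by
  simpa only [id, sub_add_cancel] using
    (h.strictMonoOn_sub_id hα).add (strictMono_id.strictMonoOn _)

lemma lt_map (h : IsIntermittentBranch T b α) (hα : 0 < α) {x : ℝ} (hx : x ∈ Ioo 0 b) :
    x < T x := by
  have := h.strictMonoOn_sub_id hα (left_mem_Ico.2 (hx.1.trans hx.2)) (Ioo_subset_Ico_self hx) hx.1
  simpa only [h.map_zero, sub_self, sub_pos] using this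

lemma antitone_backwardOrbit (h : IsIntermittentBranch T b α) (hα : 0 < α) {u : ℕ → ℝ}
    (hu : IsBackwardOrbitOn T (Ioo 0 b) u) : Antitone u :=
  hu.antitone fun _ hx => (h.lt_map hα hx).le

lemma tendsto_backwardOrbit (h : IsIntermittentBranch T b α) (hα : 0 < α) {u : ℕ → ℝ}
    (hu : IsBackwardOrbitOn T (Ioo 0 b) u) : Tendsto u atTop (𝓝 0) :=
  hu.tendsto_left ((h.continuousOn hα).mono Ioo_subset_Ico_self) fun _ hx => h.lt_map hα hx

lemma isEquivalent_backwardOrbit (h : IsIntermittentBranch T b α) (hα : 0 < α) {u v : ℕ → ℝ}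
    (hu : IsBackwardOrbitOn T (Ioo 0 b) u) (hv : IsBackwardOrbitOn T (Ioo 0 b) v) :
    u ~[atTop] v :=
  hu.isEquivalent hv ((h.strictMonoOn hα).mono Ioo_subset_Ico_self)
    (h.tendsto_backwardOrbit hα hu) (h.tendsto_backwardOrbit hα hv) (h.isEquivalent_id hα)

end IsIntermittentBranch

/-! ### The left branch of a Pomeau–Manneville map -/

lemma isLittleO_rpow_one_add_of_deriv {g : ℝ → ℝ} {p : ℝ} (hp : -1 < p)
    (hg : ∀ᶠ x in 𝓝[>] 0, DifferentiableAt ℝ g x) (hg0 : Tendsto g (𝓝[>] 0) (𝓝 0))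
    (hg' : Tendsto (fun x => deriv g x / x ^ p) (𝓝[>] 0) (𝓝 0)) :
    g =o[𝓝[>] 0] fun x => x ^ (1 + p) := by
  have hp0 : 0 < 1 + p := by linarith
  have h_pos : ∀ᶠ x : ℝ in 𝓝[>] 0, 0 < x := self_mem_nhdsWithin
  have h_deriv : ∀ᶠ x : ℝ in 𝓝[>] 0, HasDerivAt (fun x => x ^ (1 + p)) ((1 + p) * x ^ p) x := by
    filter_upwards [h_pos] with x hx
    simpa only [add_sub_cancel_left] using Real.hasDerivAt_rpow_const (p := 1 + p) (Or.inl hx.ne')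
  have h_ratio : Tendsto (fun x => deriv g x / ((1 + p) * x ^ p)) (𝓝[>] 0) (𝓝 0) := by
    simpa only [mul_comm (1 + p), ← div_div, zero_div] using hg'.div_const (1 + p)
  refine isLittleO_of_tendsto' ?_ (HasDerivAt.lhopital_zero_nhdsGT
    (hg.mono fun x hx => hx.hasDerivAt) h_deriv ?_ hg0
    (tendsto_rpow_nhdsGT_zero hp0) h_ratio)
  · filter_upwards [h_pos] with x hx h_zero using absurd h_zero (Real.rpow_pos_of_pos hx _).ne'
  · filter_upwards [h_pos] with x hx using (mul_pos hp0 (Real.rpow_pos_of_pos hx _)).ne'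

namespace PMHyp

variable {T : ℝ → ℝ} {x₀ α : ℝ}

lemma monotoneOn_left (h : PMHyp T x₀ α) : MonotoneOn T (Ico 0 x₀) := by
  have h_mono : StrictMonoOn T (Ioo 0 x₀) := by
    refine strictMonoOn_of_deriv_pos (convex_Ioo 0 x₀)
      (differentiableOn_of_one_lt_deriv fun x hx => h.expand x (Or.inl hx)).continuousOn ?_
    rw [interior_Ioo]
    exact fun x hx => zero_lt_one.trans (h.expand x (Or.inl hx))
  intro x hx y hy hxy
  rcases hx.1.eq_or_lt with rfl | hx0
  · rw [h.T0]
    exact (h.mapsI ⟨hy.1, (hy.2.trans h.x₀mem.2).le⟩).1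
  · exact h_mono.monotoneOn ⟨hx0, hx.2⟩ ⟨hx0.trans_le hxy, hy.2⟩ hxy

/-- The hypotheses do not say that `g` is continuous at `0`; the limit is forced by monotonicity of
the left branch and surjectivity onto `(0, 1)`. -/
lemma tendsto_zero (h : PMHyp T x₀ α) : Tendsto T (𝓝[>] 0) (𝓝 0) := by
  have h_cont : ContinuousWithinAt T (Ici 0) 0 := by
    refine continuousWithinAt_right_of_monotoneOn_of_exists_between h.monotoneOn_left
      (Ico_mem_nhdsGE h.x₀mem.1) fun y hy => ?_
    rw [h.T0] at hy ⊢
    obtain ⟨z, hz0, hz⟩ := exists_between (lt_min hy one_pos)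
    obtain ⟨x, hx, rfl⟩ := h.branch1.surjOn ⟨hz0, hz.trans_le (min_le_right y 1)⟩
    exact ⟨x, Ioo_subset_Ico_self hx, hz0, hz.trans_le (min_le_left y 1)⟩
  simpa only [h.T0] using (h_cont.mono Ioi_subset_Ici_self).tendsto

lemma isIntermittentBranch (h : PMHyp T x₀ α) : IsIntermittentBranch T x₀ α where
  map_zero := h.T0
  one_lt_deriv x hx := h.expand x (Or.inl hx)
  sub_id_isBigO := by
    obtain ⟨c, -, g, δ, hδ, h_form, hg, hg'⟩ := h.form
    have h_near : ∀ᶠ x in 𝓝[>] 0, x ∈ Ioo 0 δ := Ioo_mem_nhdsGT hδ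
    have hα : 0 < 1 + α := by linarith [h.αmem.1]
    have h_diff : ∀ᶠ x in 𝓝[>] 0, DifferentiableAt ℝ g x := by
      filter_upwards [h_near] with x hx
      exact (hg.differentiableOn two_ne_zero).differentiableAt (Ioo_mem_nhds hx.1 hx.2)
    have h_lim : Tendsto g (𝓝[>] 0) (𝓝 0) := by
      have h_model : Tendsto (fun x => x + c * x ^ (1 + α)) (𝓝[>] 0) (𝓝 0) := by
        have h_id : Tendsto id (𝓝[>] (0 : ℝ)) (𝓝 0) := nhdsWithin_le_nhds
        simpa only [id, mul_zero, add_zero] using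
          h_id.add ((tendsto_rpow_nhdsGT_zero hα).const_mul c)
      have h_sub := h.tendsto_zero.sub h_model
      rw [sub_zero] at h_sub
      refine h_sub.congr' ?_
      filter_upwards [h_near] with x hx
      rw [h_form x (Ioo_subset_Ico_self hx), add_sub_cancel_left]
    have hg_small := isLittleO_rpow_one_add_of_deriv (by linarith) h_diff h_lim hg'
    refine ((isBigO_const_mul_self c _ _).add hg_small.isBigO).congr' ?_ EventuallyEq.rfl
    filter_upwards [h_near] with x hx
    rw [h_form x (Ioo_subset_Ico_self hx)]
    ring

end PMHyp

/-! ### Normalized conditional Perron–Frobenius operators -/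

/-- The normalized conditional operator `P̃_A φ = P_A φ / ‖P_A φ‖₁`; where `P_A φ` vanishes almost
everywhere it is the zero function. -/
noncomputable def normalizedCondPF (PT : (ℝ → ℝ) → ℝ → ℝ) (A : Set ℝ) (φ : ℝ → ℝ) : ℝ → ℝ :=
  fun z => condPF1 PT A φ z / ∫ y in Icc (0 : ℝ) 1, |condPF1 PT A φ y|

lemma normalizedCondPF_of_notMem {PT : (ℝ → ℝ) → ℝ → ℝ} {A : Set ℝ} {φ : ℝ → ℝ} {z : ℝ}
    (hz : z ∉ A) : normalizedCondPF PT A φ z = 0 := by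
  rw [normalizedCondPF, condPF1, indicator_of_notMem hz, zero_div]

namespace IsPFT

variable {T : ℝ → ℝ} {PT : (ℝ → ℝ) → ℝ → ℝ} {A B : Set ℝ} {φ : ℝ → ℝ}

lemma integrable_condPF1 (hPT : IsPFT T PT) (hA : MeasurableSet A) (hA01 : A ⊆ Icc 0 1)
    (hφ : Integrable φ) : Integrable (condPF1 PT A φ) :=
  (integrable_indicator_iff hA).2 ((hPT _ (hφ.indicator hA).integrableOn).1.mono_set hA01)

lemma setIntegral_condPF1 (hPT : IsPFT T PT) (hA : MeasurableSet A) (hA01 : A ⊆ Icc 0 1)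
    (hφ : Integrable φ) (hB : MeasurableSet B) (hBA : B ⊆ A) :
    ∫ z in B, condPF1 PT A φ z = ∫ z in T ⁻¹' B ∩ A, φ z := by
  rw [condPF1, setIntegral_indicator hA, inter_eq_left.2 hBA,
    (hPT _ (hφ.indicator hA).integrableOn).2 B (hBA.trans hA01) hB, setIntegral_indicator hA,
    inter_assoc, inter_eq_right.2 hA01]

lemma condPF1_nonneg (hPT : IsPFT T PT) (hA : MeasurableSet A) (hA01 : A ⊆ Icc 0 1)
    (hφ : Integrable φ) (hφ0 : 0 ≤ᵐ[volume] φ) : 0 ≤ᵐ[volume] condPF1 PT A φ := by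
  refine ae_nonneg_of_forall_setIntegral_nonneg (hPT.integrable_condPF1 hA hA01 hφ) ?_
  intro s hs _
  have h_inter : ∫ z in s, condPF1 PT A φ z = ∫ z in s ∩ A, condPF1 PT A φ z := by
    rw [← setIntegral_indicator hA, condPF1, indicator_indicator, inter_self]
  rw [h_inter, hPT.setIntegral_condPF1 hA hA01 hφ (hs.inter hA) inter_subset_right]
  exact integral_nonneg_of_ae (ae_restrict_of_ae hφ0)

lemma integral_abs_condPF1 (hPT : IsPFT T PT) (hA : MeasurableSet A) (hA01 : A ⊆ Icc 0 1)
    (hφ : Integrable φ) (hφ0 : 0 ≤ᵐ[volume] φ) :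
    ∫ y in Icc (0 : ℝ) 1, |condPF1 PT A φ y| = ∫ z in T ⁻¹' A ∩ A, φ z := by
  have h_abs : (fun y => |condPF1 PT A φ y|) =ᵐ[volume] condPF1 PT A φ :=
    (hPT.condPF1_nonneg hA hA01 hφ hφ0).mono fun y hy => abs_of_nonneg hy
  rw [← hPT.setIntegral_condPF1 hA hA01 hφ hA Subset.rfl,
    integral_congr_ae (ae_restrict_of_ae h_abs), condPF1, setIntegral_indicator hA,
    setIntegral_indicator hA, inter_eq_right.2 hA01, inter_self]

lemma integrable_normalizedCondPF (hPT : IsPFT T PT) (hA : MeasurableSet A)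
    (hA01 : A ⊆ Icc 0 1) (hφ : Integrable φ) : Integrable (normalizedCondPF PT A φ) :=
  (hPT.integrable_condPF1 hA hA01 hφ).div_const _

lemma normalizedCondPF_nonneg (hPT : IsPFT T PT) (hA : MeasurableSet A) (hA01 : A ⊆ Icc 0 1)
    (hφ : Integrable φ) (hφ0 : 0 ≤ᵐ[volume] φ) : 0 ≤ᵐ[volume] normalizedCondPF PT A φ :=
  (hPT.condPF1_nonneg hA hA01 hφ hφ0).mono fun _ hz =>
    div_nonneg hz (integral_nonneg fun _ => abs_nonneg _)

lemma setIntegral_normalizedCondPF (hPT : IsPFT T PT) (hA : MeasurableSet A)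
    (hA01 : A ⊆ Icc 0 1) (hφ : Integrable φ) (hφ0 : 0 ≤ᵐ[volume] φ) (hB : MeasurableSet B)
    (hBA : B ⊆ A) :
    ∫ z in B, normalizedCondPF PT A φ z =
      (∫ z in T ⁻¹' B ∩ A, φ z) / ∫ z in T ⁻¹' A ∩ A, φ z := by
  simp only [normalizedCondPF]
  rw [integral_div, hPT.setIntegral_condPF1 hA hA01 hφ hB hBA,
    hPT.integral_abs_condPF1 hA hA01 hφ hφ0]

lemma integrable_and_nonneg_conditionedDensity (hPT : IsPFT T PT) (hA : MeasurableSet A)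
    (hA01 : A ⊆ Icc 0 1) {ψ : ℕ → ℝ → ℝ} (hψ0 : ψ 0 = A.indicator fun _ => 1)
    (hψ : ∀ k, ψ (k + 1) = normalizedCondPF PT A (ψ k)) (k : ℕ) :
    Integrable (ψ k) ∧ 0 ≤ᵐ[volume] ψ k := by
  induction k with
  | zero =>
    rw [hψ0, integrable_indicator_iff hA]
    exact ⟨integrableOn_const ((measure_mono hA01).trans_lt measure_Icc_lt_top).ne,
      Eventually.of_forall fun _ => indicator_nonneg (fun _ _ => zero_le_one) _⟩
  | succ k ih =>
    rw [hψ]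
    exact ⟨hPT.integrable_normalizedCondPF hA hA01 ih.1,
      hPT.normalizedCondPF_nonneg hA hA01 ih.1 ih.2⟩

end IsPFT

/-! ### Concentration of the conditioned densities -/

lemma preimage_Icc_inter_Icc_of_strictMonoOn {X Y : Type*} [LinearOrder X] [Preorder Y]
    {f : X → Y} {a b c : X} (hf : StrictMonoOn f (Icc a c)) (hb : b ∈ Icc a c) :
    f ⁻¹' Icc (f a) (f b) ∩ Icc a c = Icc a b := by
  have ha : a ∈ Icc a c := left_mem_Icc.2 (hb.1.trans hb.2)
  ext x
  constructor
  · rintro ⟨hfx, hx⟩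
    exact ⟨hx.1, (hf.le_iff_le hx hb).1 hfx.2⟩
  · intro hx
    have hxc : x ∈ Icc a c := ⟨hx.1, hx.2.trans hb.2⟩
    exact ⟨⟨(hf.le_iff_le ha hxc).2 hx.1, (hf.le_iff_le hxc hb).2 hx.2⟩, hxc⟩

lemma withDensity_ofReal_apply {Ω : Type*} [MeasurableSpace Ω] {μ : Measure Ω} {φ : Ω → ℝ}
    {s : Set Ω} (hs : MeasurableSet s) (hφ : Integrable φ μ) (hφ0 : 0 ≤ᵐ[μ] φ) :
    μ.withDensity (fun z => ENNReal.ofReal (φ z)) s = ENNReal.ofReal (∫ z in s, φ z ∂μ) := by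
  rw [withDensity_apply _ hs,
    ofReal_integral_eq_lintegral_ofReal hφ.integrableOn (ae_restrict_of_ae hφ0)]

theorem tendsto_diracProba_of_tendsto_measure_one {Ω ι : Type*} [TopologicalSpace Ω]
    [MeasurableSpace Ω] [OpensMeasurableSpace Ω] [HasOuterApproxClosed Ω] {L : Filter ι}
    [L.NeBot] [L.IsCountablyGenerated] {μs : ι → ProbabilityMeasure Ω} {x : Ω}
    (h : ∀ U, IsOpen U → x ∈ U → Tendsto (fun i => (μs i : Measure Ω) U) L (𝓝 1)) :
    Tendsto μs L (𝓝 (diracProba x)) := by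
  refine tendsto_of_forall_isOpen_le_liminf' fun U hU => ?_
  by_cases hx : x ∈ U
  · rw [(h U hU hx).liminf_eq, diracProba_toMeasure_apply_of_mem hx]
  · rw [diracProba_toMeasure_apply' x hU.measurableSet, indicator_of_notMem hx]
    exact zero_le

section ConditionedDensities

variable {T : ℝ → ℝ} {PT : (ℝ → ℝ) → ℝ → ℝ} {u : ℕ → ℝ} {ψ : ℕ → ℝ → ℝ}

lemma setIntegral_conditionedDensity (hPT : IsPFT T PT) (hT0 : T 0 = 0)
    (h_mono : StrictMonoOn T (Icc 0 (u 0))) (hu : IsBackwardOrbitOn T (Ioc 0 (u 0)) u)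
    (hu1 : u 0 ≤ 1) (hψ0 : ψ 0 = (Icc 0 (u 0)).indicator fun _ => 1)
    (hψ : ∀ k, ψ (k + 1) = normalizedCondPF PT (Icc 0 (u 0)) (ψ k)) (k m : ℕ) :
    ∫ z in Icc 0 (u m), ψ (k + 1) z = u (k + 1 + m) / u (k + 1) := by
  have hA01 : Icc 0 (u 0) ⊆ Icc (0 : ℝ) 1 := Icc_subset_Icc_right hu1
  have h_preimage : ∀ j, T ⁻¹' Icc 0 (u j) ∩ Icc 0 (u 0) = Icc 0 (u (j + 1)) := fun j => by
    simpa only [hT0, hu.map_succ] using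
      preimage_Icc_inter_Icc_of_strictMonoOn h_mono (Ioc_subset_Icc_self (hu.mem (j + 1)))
  have h_step : ∀ k m, ∫ z in Icc 0 (u m), ψ (k + 1) z =
      (∫ z in Icc 0 (u (m + 1)), ψ k z) / ∫ z in Icc 0 (u 1), ψ k z := fun k m => by
    obtain ⟨h_int, h_nonneg⟩ :=
      hPT.integrable_and_nonneg_conditionedDensity measurableSet_Icc hA01 hψ0 hψ k
    rw [hψ, hPT.setIntegral_normalizedCondPF measurableSet_Icc hA01 h_int h_nonneg
      measurableSet_Icc (Icc_subset_Icc_right (hu.mem m).2), h_preimage, h_preimage]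
  induction k generalizing m with
  | zero =>
    have h_init : ∀ j, ∫ z in Icc 0 (u j), ψ 0 z = u j := fun j => by
      rw [hψ0, setIntegral_indicator measurableSet_Icc,
        inter_eq_left.2 (Icc_subset_Icc_right (hu.mem j).2), setIntegral_const, smul_eq_mul,
        mul_one, Real.volume_real_Icc_of_le (hu.mem j).1.le, sub_zero]
    rw [h_step, h_init, h_init, zero_add, add_comm m]
  | succ k ih =>
    rw [h_step, ih, ih, div_div_div_cancel_right₀ (hu.mem (k + 1)).1.ne', ← add_assoc,
      add_right_comm]

lemma measure_conditionedDensity (hPT : IsPFT T PT) (hT0 : T 0 = 0)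
    (h_mono : StrictMonoOn T (Icc 0 (u 0))) (hu : IsBackwardOrbitOn T (Ioc 0 (u 0)) u)
    (hu1 : u 0 ≤ 1) (hψ0 : ψ 0 = (Icc 0 (u 0)).indicator fun _ => 1)
    (hψ : ∀ k, ψ (k + 1) = normalizedCondPF PT (Icc 0 (u 0)) (ψ k)) (k m : ℕ) :
    volume.withDensity (fun z => ENNReal.ofReal (ψ (k + 1) z)) (Icc 0 (u m)) =
      ENNReal.ofReal (u (k + 1 + m) / u (k + 1)) := by
  obtain ⟨h_int, h_nonneg⟩ := hPT.integrable_and_nonneg_conditionedDensity measurableSet_Icc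
    (Icc_subset_Icc_right hu1) hψ0 hψ (k + 1)
  rw [withDensity_ofReal_apply measurableSet_Icc h_int h_nonneg,
    setIntegral_conditionedDensity hPT hT0 h_mono hu hu1 hψ0 hψ]

lemma isProbabilityMeasure_conditionedDensity (hPT : IsPFT T PT) (hT0 : T 0 = 0)
    (h_mono : StrictMonoOn T (Icc 0 (u 0))) (hu : IsBackwardOrbitOn T (Ioc 0 (u 0)) u)
    (hu1 : u 0 ≤ 1) (hψ0 : ψ 0 = (Icc 0 (u 0)).indicator fun _ => 1)
    (hψ : ∀ k, ψ (k + 1) = normalizedCondPF PT (Icc 0 (u 0)) (ψ k)) (k : ℕ) :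
    IsProbabilityMeasure (volume.withDensity fun z => ENNReal.ofReal (ψ (k + 1) z)) := by
  obtain ⟨h_int, h_nonneg⟩ := hPT.integrable_and_nonneg_conditionedDensity measurableSet_Icc
    (Icc_subset_Icc_right hu1) hψ0 hψ (k + 1)
  have h_mass : ∫ z, ψ (k + 1) z = ∫ z in Icc 0 (u 0), ψ (k + 1) z :=
    (setIntegral_eq_integral_of_forall_compl_eq_zero fun z hz => by
      rw [hψ, normalizedCondPF_of_notMem hz]).symm
  refine ⟨?_⟩
  rw [withDensity_ofReal_apply MeasurableSet.univ h_int h_nonneg, setIntegral_univ, h_mass,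
    setIntegral_conditionedDensity hPT hT0 h_mono hu hu1 hψ0 hψ, add_zero,
    div_self (hu.mem (k + 1)).1.ne', ENNReal.ofReal_one]

theorem tendsto_integral_conditionedDensity (hPT : IsPFT T PT) (hT0 : T 0 = 0)
    (h_mono : StrictMonoOn T (Icc 0 (u 0))) (hu : IsBackwardOrbitOn T (Ioc 0 (u 0)) u)
    (hu1 : u 0 ≤ 1) (h_lim : Tendsto u atTop (𝓝 0))
    (h_shift : ∀ m, (fun k => u (k + m)) ~[atTop] u)
    (hψ0 : ψ 0 = (Icc 0 (u 0)).indicator fun _ => 1)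
    (hψ : ∀ k, ψ (k + 1) = normalizedCondPF PT (Icc 0 (u 0)) (ψ k))
    (f : BoundedContinuousFunction ℝ ℝ) :
    Tendsto (fun k => ∫ z, f z ∂(volume.withDensity fun z => ENNReal.ofReal (ψ k z))) atTop
      (𝓝 (f 0)) := by
  let μ : ℕ → ProbabilityMeasure ℝ := fun k =>
    ⟨_, isProbabilityMeasure_conditionedDensity hPT hT0 h_mono hu hu1 hψ0 hψ k⟩
  have hμ : Tendsto μ atTop (𝓝 (diracProba 0)) := by
    refine tendsto_diracProba_of_tendsto_measure_one fun U hU h0U => ?_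
    obtain ⟨m, hm⟩ : ∃ m, Icc 0 (u m) ⊆ U :=
      (tendsto_smallSets_iff.1 (tendsto_const_nhds.Icc h_lim) U (hU.mem_nhds h0U)).exists
    have h_ratio : Tendsto (fun k => u (k + 1 + m) / u (k + 1)) atTop (𝓝 1) :=
      ((isEquivalent_iff_tendsto_one (Eventually.of_forall fun k => (hu.mem k).1.ne')).1
        (h_shift m)).comp (tendsto_add_atTop_nat 1)
    have h_lower := ENNReal.tendsto_ofReal h_ratio
    rw [ENNReal.ofReal_one] at h_lower
    refine tendsto_of_tendsto_of_tendsto_of_le_of_le h_lower tendsto_const_nhds (fun k => ?_)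
      fun k => prob_le_one
    exact (measure_conditionedDensity hPT hT0 h_mono hu hu1 hψ0 hψ k m).symm.trans_le
      (measure_mono hm)
  have h_integral := ProbabilityMeasure.tendsto_iff_forall_integral_tendsto.1 hμ f
  rw [← tendsto_add_atTop_iff_nat 1]
  simp only [diracProba, ProbabilityMeasure.coe_mk, integral_dirac] at h_integral
  exact h_integral

end ConditionedDensities

theorem statement16_general {T : ℝ → ℝ} {b α : ℝ} (hT : IsIntermittentBranch T b α)
    (hα : 0 < α) {PT : (ℝ → ℝ) → ℝ → ℝ} (hPT : IsPFT T PT) {eps eta : ℕ → ℝ}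
    (heps : IsBackwardOrbitOn T (Ioo 0 b) eps) (heps1 : eps 0 ≤ 1)
    (heta : IsBackwardOrbitOn T (Ico 0 b) eta) {ψ : ℕ → ℝ → ℝ}
    (hψ0 : ψ 0 = (Icc 0 (eps 0)).indicator fun _ => 1)
    (hψ : ∀ k, ψ (k + 1) = normalizedCondPF PT (Icc 0 (eps 0)) (ψ k)) :
    Tendsto eps atTop (𝓝 0) ∧
    Antitone (fun k => eps k - eps (k + 1)) ∧
    (∃ C : ℝ, 0 < C ∧ ∀ k, eps k - eps (k + 1) ≤ C * eps k ^ (1 + α)) ∧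
    (0 < eta 0 →
      Tendsto (fun k => (eps k - eta k) / eps k) atTop (𝓝 0) ∧
      Tendsto (fun k => eta k / eps k) atTop (𝓝 1)) ∧
    ∀ f : BoundedContinuousFunction ℝ ℝ,
      Tendsto (fun k => ∫ z, f z ∂(volume.withDensity fun z => ENNReal.ofReal (ψ k z))) atTop
        (𝓝 (f 0)) := by
  have h_lim := hT.tendsto_backwardOrbit hα heps
  have h_anti := hT.antitone_backwardOrbit hα heps
  refine ⟨h_lim,
    heps.antitone_sub_succ ((hT.strictMonoOn_sub_id hα).monotoneOn.mono Ioo_subset_Ico_self) h_anti,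
    heps.exists_sub_succ_le_mul_rpow h_lim h_anti (by linarith) hT.sub_id_isBigO,
    fun heta0 => ?_, ?_⟩
  · have h_equiv := hT.isEquivalent_backwardOrbit hα (heta.of_Ico_of_pos hT.map_zero heta0) heps
    exact ⟨h_equiv.isLittleO.symm.tendsto_div_nhds_zero,
      (isEquivalent_iff_tendsto_one (Eventually.of_forall fun k => (heps.mem k).1.ne')).1 h_equiv⟩
  · have h_orbit : IsBackwardOrbitOn T (Ioc 0 (eps 0)) eps :=
      ⟨fun k => ⟨(heps.mem k).1, h_anti (Nat.zero_le k)⟩, heps.map_succ⟩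
    have h_mono : StrictMonoOn T (Icc 0 (eps 0)) :=
      (hT.strictMonoOn hα).mono (Icc_subset_Ico_right (heps.mem 0).2)
    exact tendsto_integral_conditionedDensity hPT hT.map_zero h_mono h_orbit heps1 h_lim
      (heps.isEquivalent_shift (heps.tendsto_nhdsGT h_lim) (hT.isEquivalent_id hα)) hψ0 hψ

/-- Fix `ε₀ ∈ (0,x₀)` and `η₀ ∈ [0,ε₀)`, and define `ε_k`,
`η_k` by pulling back along the left branch of `T`. Then `ε_k → 0`; the
differences `ε_k − ε_{k+1}` are decreasing; `ε_k − ε_{k+1} ≤ C ε_k^{1+α}`;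
`(ε_k − η_k)/ε_k → 0`, i.e. `η_k/ε_k → 1`; and the probability measures with
densities `(P̃_{[0,ε₀]})^k χ_{[0,ε₀]}` converge weakly to `δ₀`. -/
theorem statement16 (T : ℝ → ℝ) (x₀ α : ℝ) (hPM : PMHyp T x₀ α)
    (PT : (ℝ → ℝ) → ℝ → ℝ) (hPT : IsPFT T PT)
    (ε₀ η₀ : ℝ) (hε₀ : ε₀ ∈ Set.Ioo 0 x₀) (hη₀ : η₀ ∈ Set.Ico 0 ε₀)
    (eps eta : ℕ → ℝ) (heps0 : eps 0 = ε₀) (heta0 : eta 0 = η₀)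
    (hepsrec : ∀ k, eps (k+1) ∈ Set.Ioo 0 ε₀ ∧ T (eps (k+1)) = eps k)
    (hetarec : ∀ k, eta (k+1) ∈ Set.Ico 0 ε₀ ∧ T (eta (k+1)) = eta k)
    (ψ : ℕ → ℝ → ℝ)
    (hψ0 : ψ 0 = (Set.Icc 0 ε₀).indicator fun _ => 1)
    (hψrec : ∀ k, ψ (k+1) = fun z =>
      condPF1 PT (Set.Icc 0 ε₀) (ψ k) z /
        ∫ y in Set.Icc (0:ℝ) 1, |condPF1 PT (Set.Icc 0 ε₀) (ψ k) y|) :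
    Tendsto eps atTop (𝓝 0) ∧
    Antitone (fun k => eps k - eps (k+1)) ∧
    (∃ C : ℝ, 0 < C ∧ ∀ k, eps k - eps (k+1) ≤ C * eps k ^ (1+α)) ∧
    (0 < η₀ →
      Tendsto (fun k => (eps k - eta k) / eps k) atTop (𝓝 0) ∧
      Tendsto (fun k => eta k / eps k) atTop (𝓝 1)) ∧
    (∀ f : BoundedContinuousFunction ℝ ℝ,
      Tendsto (fun k => ∫ z, f z
          ∂(volume.withDensity fun z => ENNReal.ofReal (ψ k z)))
        atTop (𝓝 (f 0))) := by
  subst heps0 heta0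
  have heps : IsBackwardOrbitOn T (Ioo 0 x₀) eps :=
    .of_succ hε₀ fun k => ⟨Ioo_subset_Ioo_right hε₀.2.le (hepsrec k).1, (hepsrec k).2⟩
  have heta : IsBackwardOrbitOn T (Ico 0 x₀) eta :=
    .of_succ (Ico_subset_Ico_right hε₀.2.le hη₀) fun k =>
      ⟨Ico_subset_Ico_right hε₀.2.le (hetarec k).1, (hetarec k).2⟩
  exact statement16_general hPM.isIntermittentBranch hPM.αmem.1 hPT heps
    (hε₀.2.trans hPM.x₀mem.2).le heta hψ0 hψrec
end

section
/- For ε₀ ∈ (0,x₀) define the two-state transition probabilities with respect to Lebesgue measure: a_{ε₀} = Leb([0,ε₀] ∩ T⁻¹((ε₀,1]))/ε₀ = (ε₀ − T_left⁻¹(ε₀))/ε₀ (where T_left⁻¹ is the inverse of the left branch of T) and b_{ε₀} = Leb((ε₀,1] ∩ T⁻¹([0,ε₀]))/(1−ε₀). Then: (i) a_{ε₀} ∼ ε₀^α, i.e. there exist constants 0 < k₁ ≤ k₂ and δ > 0 such that k₁·ε₀^α ≤ a_{ε₀} ≤ k₂·ε₀^α for all ε₀ ∈ (0,δ); and (ii)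 lim_{ε₀→0⁺} b_{ε₀}/ε₀ = lim_{x→x₀⁺} 1/T′(x). -/
open MeasureTheory Set Filter Topology
open scoped Classical

/-!
Both limits are instances of l'Hôpital's rule at the left end of a branch. On the left branch
`T' - 1 ~ (1 + α) c y ^ α` gives `T y - y ~ c y ^ (1 + α)`; substituting `y = T_left⁻¹ e`, for
which `y ~ e`, yields the sharp form `a_e ~ c e ^ α`. Since `T x > x` on the left branch, the
points of `(e, 1]` entering `[0, e]` form, up to a null set, an interval `(x₀, z]` with `T z = e`,
and its length is `~ e / D` because `T z / (z - x₀) → D`.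
-/

lemma tendsto_nhdsGT_of_bijOn_Ioo {X Y : Type*} [LinearOrder X] [TopologicalSpace X]
    [OrderTopology X] [ConditionallyCompleteLinearOrder Y] [DenselyOrdered Y] [TopologicalSpace Y]
    [OrderTopology Y] {f : X → Y} {a b : X} {c d : Y} (hbij : BijOn f (Ioo a b) (Ioo c d))
    (hmono : StrictMonoOn f (Ioo a b)) (hcd : c < d) : Tendsto f (𝓝[>] a) (𝓝[>] c) := by
  have hne : (Ioo a b).Nonempty := image_nonempty.1 (hbij.image_eq ▸ nonempty_Ioo.2 hcd)
  have hab : a < b := hne.elim fun _ hx => hx.1.trans hx.2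
  have hlim := hmono.monotoneOn.tendsto_nhdsWithin_Ioo_right hne (hbij.image_eq ▸ bddBelow_Ioo)
  rw [hbij.image_eq, csInf_Ioo hcd] at hlim
  refine tendsto_nhdsWithin_iff.2 ⟨hlim, ?_⟩
  filter_upwards [Ioo_mem_nhdsGT hab] with x hx using (hbij.mapsTo hx).1

lemma tendsto_invFunOn_nhdsGT_of_bijOn_Ioo {X Y : Type*} [ConditionallyCompleteLinearOrder X]
    [DenselyOrdered X] [Nonempty X] [TopologicalSpace X] [OrderTopology X] [LinearOrder Y]
    [TopologicalSpace Y] [OrderTopology Y] {f : X → Y} {a b : X} {c d : Y}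
    (hbij : BijOn f (Ioo a b) (Ioo c d)) (hmono : StrictMonoOn f (Ioo a b)) (hab : a < b) :
    Tendsto (Function.invFunOn f (Ioo a b)) (𝓝[>] c) (𝓝[>] a) := by
  have hinv := hbij.invOn_invFunOn
  have hbij' := hbij.symm hinv.symm
  refine tendsto_nhdsGT_of_bijOn_Ioo hbij' (fun u hu v hv huv => ?_) hab
  rwa [← hmono.lt_iff_lt (hbij'.mapsTo hu) (hbij'.mapsTo hv), hinv.2 hu, hinv.2 hv]

lemma lt_of_strictMonoOn_Ioo_of_tendsto {X Y : Type*} [LinearOrder X] [DenselyOrdered X]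
    [TopologicalSpace X] [OrderTopology X] [LinearOrder Y] [TopologicalSpace Y]
    [ClosedIicTopology Y] {f : X → Y} {a b x : X} {l : Y} (hmono : StrictMonoOn f (Ioo a b))
    (hlim : Tendsto f (𝓝[>] a) (𝓝 l)) (hx : x ∈ Ioo a b) : l < f x := by
  obtain ⟨w, haw, hwx⟩ := exists_between hx.1
  have hw : w ∈ Ioo a b := ⟨haw, hwx.trans hx.2⟩
  have : (𝓝[>] a).NeBot := nhdsGT_neBot_of_exists_gt ⟨w, haw⟩
  have hlw : l ≤ f w := by
    refine le_of_tendsto hlim ?_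
    filter_upwards [Ioo_mem_nhdsGT haw] with u hu
    exact (hmono ⟨hu.1, hu.2.trans hw.2⟩ hw hu.2).le
  exact hlw.trans_lt (hmono hw hx hwx)

lemma strictMonoOn_of_isOpen_of_deriv_pos {s : Set ℝ} {f : ℝ → ℝ} (hs : Convex ℝ s)
    (hso : IsOpen s) (hf : ∀ x ∈ s, 0 < deriv f x) : StrictMonoOn f s := by
  refine strictMonoOn_of_deriv_pos hs (fun x hx => ?_) (by rwa [hso.interior_eq])
  exact (differentiableAt_of_deriv_ne_zero (hf x hx).ne').continuousAt.continuousWithinAt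

lemma eventually_differentiableAt_nhdsGT {f : ℝ → ℝ} {a b : ℝ} (hab : a < b)
    (hf : ∀ x ∈ Ioo a b, deriv f x ≠ 0) : ∀ᶠ x in 𝓝[>] a, DifferentiableAt ℝ f x := by
  filter_upwards [Ioo_mem_nhdsGT hab] with x hx
  exact differentiableAt_of_deriv_ne_zero (hf x hx)

lemma deriv_sub_id {f : ℝ → ℝ} {x : ℝ} (hf : DifferentiableAt ℝ f x) :
    deriv (fun y => f y - y) x = deriv f x - 1 :=
  (hf.hasDerivAt.sub (hasDerivAt_id x)).deriv

lemma tendsto_sub_id_nhdsGT {f : ℝ → ℝ} {a : ℝ} (hf : Tendsto f (𝓝[>] a) (𝓝 a)) :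
    Tendsto (fun x => f x - x) (𝓝[>] a) (𝓝 0) := by
  simpa only [sub_self, id] using hf.sub (tendsto_id.mono_left nhdsWithin_le_nhds)

lemma lt_self_of_one_lt_deriv {f : ℝ → ℝ} {a b x : ℝ} (hlim : Tendsto f (𝓝[>] a) (𝓝 a))
    (hf : ∀ y ∈ Ioo a b, 1 < deriv f y) (hx : x ∈ Ioo a b) : x < f x := by
  have hmono : StrictMonoOn (fun y => f y - y) (Ioo a b) := by
    refine strictMonoOn_of_isOpen_of_deriv_pos (convex_Ioo a b) isOpen_Ioo fun y hy => ?_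
    have hy1 := hf y hy
    rw [deriv_sub_id (differentiableAt_of_deriv_ne_zero (zero_lt_one.trans hy1).ne')]
    exact sub_pos.2 hy1
  exact sub_pos.1 (lt_of_strictMonoOn_Ioo_of_tendsto (f := fun y => f y - y) hmono
    (tendsto_sub_id_nhdsGT hlim) hx)

lemma tendsto_div_rpow_of_tendsto_deriv_div_rpow {f : ℝ → ℝ} {a p L : ℝ} (hp : -1 < p)
    (hdiff : ∀ᶠ x in 𝓝[>] a, DifferentiableAt ℝ f x) (hf : Tendsto f (𝓝[>] a) (𝓝 0))
    (hderiv : Tendsto (fun x => deriv f x / (x - a) ^ p) (𝓝[>] a) (𝓝 L)) :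
    Tendsto (fun x => f x / (x - a) ^ (1 + p)) (𝓝[>] a) (𝓝 (L / (1 + p))) := by
  have hp1 : 0 < 1 + p := by linarith
  have hpow : ∀ x ∈ Ioi a, HasDerivAt (fun y => (y - a) ^ (1 + p)) ((1 + p) * (x - a) ^ p) x := by
    intro x hx
    simpa [mul_comm] using
      ((hasDerivAt_id x).sub_const a).rpow_const (p := 1 + p) (Or.inl (sub_pos.2 hx).ne')
  have hpow0 : Tendsto (fun y => (y - a) ^ (1 + p)) (𝓝[>] a) (𝓝 0) := by
    have hcont : ContinuousAt (fun y => (y - a) ^ (1 + p)) a :=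
      (continuousAt_id.sub continuousAt_const).rpow_const (Or.inr hp1.le)
    simpa [Real.zero_rpow hp1.ne'] using hcont.tendsto.mono_left nhdsWithin_le_nhds
  refine HasDerivAt.lhopital_zero_nhdsGT (hdiff.mono fun x hx => hx.hasDerivAt)
    (eventually_mem_nhdsWithin.mono hpow) ?_ hf hpow0 ?_
  · filter_upwards [self_mem_nhdsWithin] with x hx
    exact (mul_pos hp1 (Real.rpow_pos_of_pos (sub_pos.2 hx) p)).ne'
  · exact (hderiv.div_const (1 + p)).congr fun x => by rw [div_div, mul_comm]

lemma tendsto_sub_id_div_rpow_of_tendsto_deriv {f : ℝ → ℝ} {p c : ℝ} (hp : -1 < p)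
    (hdiff : ∀ᶠ x in 𝓝[>] 0, DifferentiableAt ℝ f x) (hf : Tendsto f (𝓝[>] 0) (𝓝 0))
    (hderiv : Tendsto (fun x => (deriv f x - 1) / x ^ p) (𝓝[>] 0) (𝓝 ((1 + p) * c))) :
    Tendsto (fun x => (f x - x) / x ^ (1 + p)) (𝓝[>] 0) (𝓝 c) := by
  have hderiv' : Tendsto (fun x => deriv (fun y => f y - y) x / (x - 0) ^ p) (𝓝[>] 0)
      (𝓝 ((1 + p) * c)) := by
    refine hderiv.congr' ?_
    filter_upwards [hdiff] with x hx
    rw [deriv_sub_id hx, sub_zero]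
  have hlhopital := tendsto_div_rpow_of_tendsto_deriv_div_rpow hp
    (hdiff.mono fun x hx => hx.fun_sub differentiableAt_fun_id) (tendsto_sub_id_nhdsGT hf) hderiv'
  rw [mul_div_cancel_left₀ c (by linarith : 1 + p ≠ 0)] at hlhopital
  simpa only [sub_zero] using hlhopital

lemma tendsto_div_sub_of_tendsto_deriv {f : ℝ → ℝ} {a D : ℝ}
    (hdiff : ∀ᶠ x in 𝓝[>] a, DifferentiableAt ℝ f x) (hf : Tendsto f (𝓝[>] a) (𝓝 0))
    (hderiv : Tendsto (deriv f) (𝓝[>] a) (𝓝 D)) :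
    Tendsto (fun x => f x / (x - a)) (𝓝[>] a) (𝓝 D) := by
  simpa using tendsto_div_rpow_of_tendsto_deriv_div_rpow (p := 0) (by norm_num) hdiff hf
    (by simpa using hderiv)

/-- The transition probability `a_e` out of `[0, e]`, with `T_left⁻¹` encoded as the inverse of
`T` on `(0, x₀)`. -/
noncomputable def escapeProb (T : ℝ → ℝ) (x₀ e : ℝ) : ℝ :=
  (e - Function.invFunOn T (Ioo 0 x₀) e) / e

/-- The transition probability `b_e` from `(e, 1]` into `[0, e]`. -/
noncomputable def entryProb (T : ℝ → ℝ) (e : ℝ) : ℝ :=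
  volume.real (Ioc e 1 ∩ T ⁻¹' Icc 0 e) / (1 - e)

section Escape

variable {T : ℝ → ℝ} {x₀ α c : ℝ}

lemma tendsto_div_id_of_tendsto_sub_div_rpow (hα : 0 < α)
    (hT : Tendsto (fun y => (T y - y) / y ^ (1 + α)) (𝓝[>] 0) (𝓝 c)) :
    Tendsto (fun y => T y / y) (𝓝[>] 0) (𝓝 1) := by
  have hpow : Tendsto (fun y : ℝ => y ^ α) (𝓝[>] 0) (𝓝 0) :=
    (tendsto_id.mono_left nhdsWithin_le_nhds).rpow_const_nhds_zero hα
  have hlim : Tendsto (fun y => 1 + (T y - y) / y ^ (1 + α) * y ^ α) (𝓝[>] 0) (𝓝 1) := by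
    simpa using (hT.mul hpow).const_add 1
  refine hlim.congr' ?_
  filter_upwards [self_mem_nhdsWithin] with y (hy : 0 < y)
  rw [Real.rpow_add hy, Real.rpow_one]
  field_simp [(Real.rpow_pos_of_pos hy α).ne']
  ring

lemma tendsto_sub_div_div_rpow_of_tendsto_sub_div_rpow (hα : 0 < α)
    (hT : Tendsto (fun y => (T y - y) / y ^ (1 + α)) (𝓝[>] 0) (𝓝 c)) :
    Tendsto (fun y => (T y - y) / T y / T y ^ α) (𝓝[>] 0) (𝓝 c) := by
  have hratio := tendsto_div_id_of_tendsto_sub_div_rpow hα hT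
  have hratio_pow : Tendsto (fun y => (T y / y) ^ (1 + α)) (𝓝[>] 0) (𝓝 1) := by
    simpa using hratio.rpow_const (p := 1 + α) (Or.inl one_ne_zero)
  have hlim : Tendsto (fun y => (T y - y) / y ^ (1 + α) / (T y / y) ^ (1 + α)) (𝓝[>] 0) (𝓝 c) := by
    simpa only [div_one] using! hT.div hratio_pow one_ne_zero
  refine hlim.congr' ?_
  filter_upwards [self_mem_nhdsWithin, hratio.eventually_const_lt zero_lt_one] with y (hy : 0 < y)
    hTy_div
  have hTy : 0 < T y := (div_pos_iff_of_pos_right hy).1 hTy_div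
  have hyα := Real.rpow_pos_of_pos hy (1 + α)
  rw [Real.div_rpow hTy.le hy.le, div_div, mul_div_cancel₀ _ hyα.ne', Real.rpow_add hTy,
    Real.rpow_one, div_div]

lemma tendsto_escapeProb_div_rpow {d : ℝ} (hα : 0 < α) (hx₀ : 0 < x₀)
    (hbij : BijOn T (Ioo 0 x₀) (Ioo 0 d)) (hmono : StrictMonoOn T (Ioo 0 x₀)) (hd : 0 < d)
    (hT : Tendsto (fun y => (T y - y) / y ^ (1 + α)) (𝓝[>] 0) (𝓝 c)) :
    Tendsto (fun e => escapeProb T x₀ e / e ^ α) (𝓝[>] 0) (𝓝 c) := by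
  have hinv := tendsto_invFunOn_nhdsGT_of_bijOn_Ioo hbij hmono hx₀
  refine ((tendsto_sub_div_div_rpow_of_tendsto_sub_div_rpow hα hT).comp hinv).congr' ?_
  filter_upwards [Ioo_mem_nhdsGT hd] with e he
  simp only [Function.comp_apply, hbij.invOn_invFunOn.2 he, escapeProb]

lemma exists_rpow_bounds_of_tendsto_escapeProb (hinj : InjOn T (Ioo 0 x₀)) (hc : 0 < c)
    (h : Tendsto (fun e => escapeProb T x₀ e / e ^ α) (𝓝[>] 0) (𝓝 c)) :
    ∃ k₁ k₂ δ : ℝ, 0 < k₁ ∧ k₁ ≤ k₂ ∧ 0 < δ ∧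
      ∀ e ∈ Ioo (0 : ℝ) δ, ∀ y ∈ Ioo (0 : ℝ) x₀, T y = e →
        k₁ * e ^ α ≤ (e - y) / e ∧ (e - y) / e ≤ k₂ * e ^ α := by
  have hmem : Icc (c / 2) (2 * c) ∈ 𝓝 c := Icc_mem_nhds (by linarith) (by linarith)
  obtain ⟨δ, hδ, hbound⟩ := mem_nhdsGT_iff_exists_Ioo_subset.1 (h hmem)
  refine ⟨c / 2, 2 * c, δ, half_pos hc, by linarith, hδ, fun e he y hy hye => ?_⟩
  have hprob : escapeProb T x₀ e = (e - y) / e := by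
    rw [escapeProb, ← hye, hinj.leftInvOn_invFunOn hy]
  have heα := Real.rpow_pos_of_pos he.1 α
  have hratio : (e - y) / e / e ^ α ∈ Icc (c / 2) (2 * c) := hprob ▸ hbound he
  exact ⟨(le_div_iff₀ heα).1 hratio.1, (div_le_iff₀ heα).1 hratio.2⟩

end Escape

lemma Ioc_inter_preimage_Icc_ae_eq_Ioc {X : Type*} [LinearOrder X] [MeasurableSpace X]
    {μ : Measure X} [NullSingletonClass μ] {T : X → X} {a b x₀ e z : X} (he : e < x₀)
    (hleft : ∀ x ∈ Ioo e x₀, e < T x) (hright : ∀ x ∈ Ioo x₀ b, a ≤ T x)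
    (hmono : StrictMonoOn T (Ioo x₀ b)) (hz : z ∈ Ioo x₀ b) (hTz : T z = e) :
    (Ioc e b ∩ T ⁻¹' Icc a e : Set X) =ᵐ[μ] Ioc x₀ z := by
  rw [eventuallyEq_set]
  filter_upwards [μ.ae_ne x₀, μ.ae_ne b] with x hxx₀ hxb
  constructor
  · rintro ⟨⟨hex, hxb'⟩, -, hTx⟩
    have hx₀x : x₀ < x := by
      by_contra! hxx₀'
      exact (hleft x ⟨hex, hxx₀'.lt_of_ne hxx₀⟩).not_ge hTx
    exact ⟨hx₀x, (hmono.le_iff_le ⟨hx₀x, hxb'.lt_of_ne hxb⟩ hz).1 (hTx.trans_eq hTz.symm)⟩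
  · rintro ⟨hx₀x, hxz⟩
    have hx : x ∈ Ioo x₀ b := ⟨hx₀x, hxz.trans_lt hz.2⟩
    exact ⟨⟨he.trans hx₀x, hx.2.le⟩, hright x hx, hTz ▸ (hmono.le_iff_le hx hz).2 hxz⟩

section Entry

variable {T : ℝ → ℝ} {x₀ D : ℝ}

lemma entryProb_eq {e z : ℝ} (he : e < x₀) (hleft : ∀ x ∈ Ioo e x₀, e < T x)
    (hright : ∀ x ∈ Ioo x₀ 1, 0 ≤ T x) (hmono : StrictMonoOn T (Ioo x₀ 1)) (hz : z ∈ Ioo x₀ 1)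
    (hTz : T z = e) : entryProb T e = (z - x₀) / (1 - e) := by
  rw [entryProb,
    measureReal_congr (Ioc_inter_preimage_Icc_ae_eq_Ioc he hleft hright hmono hz hTz),
    Real.volume_real_Ioc_of_le hz.1.le]

lemma tendsto_entryProb_div (hx₀ : x₀ ∈ Ioo 0 1) (hleft : ∀ x ∈ Ioo 0 x₀, x < T x)
    (hbij : BijOn T (Ioo x₀ 1) (Ioo 0 1)) (hmono : StrictMonoOn T (Ioo x₀ 1))
    (hslope : Tendsto (fun x => T x / (x - x₀)) (𝓝[>] x₀) (𝓝 D)) (hD : D ≠ 0) :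
    Tendsto (fun e => entryProb T e / e) (𝓝[>] 0) (𝓝 D⁻¹) := by
  have hinv := tendsto_invFunOn_nhdsGT_of_bijOn_Ioo hbij hmono hx₀.2
  have hone_sub : Tendsto (fun e : ℝ => 1 - e) (𝓝[>] 0) (𝓝 1) := by
    have hid : Tendsto (fun e : ℝ => e) (𝓝[>] 0) (𝓝 0) := nhdsWithin_le_nhds
    simpa using hid.const_sub 1
  have hlim := ((hslope.comp hinv).inv₀ hD).div hone_sub one_ne_zero
  rw [div_one] at hlim
  refine hlim.congr' ?_
  filter_upwards [Ioo_mem_nhdsGT hx₀.1] with e he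
  have he1 : e ∈ Ioo (0 : ℝ) 1 := ⟨he.1, he.2.trans hx₀.2⟩
  have hTz : T (Function.invFunOn T (Ioo x₀ 1) e) = e := hbij.invOn_invFunOn.2 he1
  have hentry := entryProb_eq he.2 (fun x hx => hx.1.trans (hleft x ⟨he.1.trans hx.1, hx.2⟩))
    (fun x hx => (hbij.mapsTo hx).1.le) hmono (hbij.surjOn.mapsTo_invFunOn he1) hTz
  rw [hentry, Pi.div_apply, Function.comp_apply, hTz, inv_div, div_right_comm]

end Entry

theorem statement18_general {T : ℝ → ℝ} {x₀ α c D : ℝ} (hα : 0 < α) (hx₀ : x₀ ∈ Ioo 0 1)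
    (hleft : BijOn T (Ioo 0 x₀) (Ioo 0 1)) (hright : BijOn T (Ioo x₀ 1) (Ioo 0 1))
    (hderiv_left : ∀ x ∈ Ioo 0 x₀, 1 < deriv T x) (hderiv_right : ∀ x ∈ Ioo x₀ 1, 0 < deriv T x)
    (hderiv_zero : Tendsto (fun x => (deriv T x - 1) / x ^ α) (𝓝[>] 0) (𝓝 ((1 + α) * c)))
    (hderiv_x₀ : Tendsto (deriv T) (𝓝[>] x₀) (𝓝 D)) (hD : D ≠ 0) :
    Tendsto (fun e => escapeProb T x₀ e / e ^ α) (𝓝[>] 0) (𝓝 c) ∧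
      Tendsto (fun e => entryProb T e / e) (𝓝[>] 0) (𝓝 D⁻¹) := by
  have hpos_left : ∀ x ∈ Ioo 0 x₀, 0 < deriv T x := fun x hx => zero_lt_one.trans (hderiv_left x hx)
  have hmono_left := strictMonoOn_of_isOpen_of_deriv_pos (convex_Ioo _ _) isOpen_Ioo hpos_left
  have hmono_right := strictMonoOn_of_isOpen_of_deriv_pos (convex_Ioo _ _) isOpen_Ioo hderiv_right
  have hlim_left := tendsto_nhds_of_tendsto_nhdsWithin
    (tendsto_nhdsGT_of_bijOn_Ioo hleft hmono_left one_pos)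
  have hlim_right := tendsto_nhds_of_tendsto_nhdsWithin
    (tendsto_nhdsGT_of_bijOn_Ioo hright hmono_right one_pos)
  exact ⟨tendsto_escapeProb_div_rpow hα hx₀.1 hleft hmono_left one_pos
      (tendsto_sub_id_div_rpow_of_tendsto_deriv (neg_one_lt_zero.trans hα)
        (eventually_differentiableAt_nhdsGT hx₀.1 fun x hx => (hpos_left x hx).ne') hlim_left
        hderiv_zero),
    tendsto_entryProb_div hx₀ (fun x => lt_self_of_one_lt_deriv hlim_left hderiv_left) hright
      hmono_right (tendsto_div_sub_of_tendsto_deriv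
        (eventually_differentiableAt_nhdsGT hx₀.2 fun x hx => (hderiv_right x hx).ne') hlim_right
        hderiv_x₀) hD⟩

lemma PMHyp.exists_tendsto_deriv_sub_one_div_rpow {T : ℝ → ℝ} {x₀ α : ℝ} (h : PMHyp T x₀ α) :
    ∃ c, 0 < c ∧ Tendsto (fun x => (deriv T x - 1) / x ^ α) (𝓝[>] 0) (𝓝 ((1 + α) * c)) := by
  obtain ⟨c, hc, g, δ, hδ, hform, hg, hg'⟩ := h.form
  refine ⟨c, hc, ?_⟩
  have hlim : Tendsto (fun x => (1 + α) * c + deriv g x / x ^ α) (𝓝[>] 0) (𝓝 ((1 + α) * c)) := by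
    simpa using hg'.const_add ((1 + α) * c)
  refine hlim.congr' ?_
  filter_upwards [Ioo_mem_nhdsGT hδ] with x hx
  have hxα := Real.rpow_pos_of_pos hx.1 α
  have hgx : HasDerivAt g (deriv g x) x :=
    ((hg.differentiableOn two_ne_zero).differentiableAt (isOpen_Ioo.mem_nhds hx)).hasDerivAt
  have hexpansion : T =ᶠ[𝓝 x] fun y => y + c * y ^ (1 + α) + g y := by
    filter_upwards [isOpen_Ioo.mem_nhds hx] with y hy using hform y (Ioo_subset_Ico_self hy)
  have hderiv : deriv T x = 1 + c * ((1 + α) * x ^ α) + deriv g x := by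
    have hpow := Real.hasDerivAt_rpow_const (p := 1 + α) (Or.inl hx.1.ne')
    rw [add_sub_cancel_left] at hpow
    rw [hexpansion.deriv_eq]
    exact (((hasDerivAt_id x).add (hpow.const_mul c)).add hgx).deriv
  rw [hderiv]
  field_simp
  ring

/-- For the two-state transition probabilities with respect
to Lebesgue measure, `a_{ε₀} = (ε₀ − T_left⁻¹(ε₀))/ε₀` and
`b_{ε₀} = Leb((ε₀,1] ∩ T⁻¹[0,ε₀])/(1−ε₀)`: (i) `a_{ε₀} ∼ ε₀^α`, i.e. there
are `0 < k₁ ≤ k₂` and `δ > 0` with `k₁ ε₀^α ≤ a_{ε₀} ≤ k₂ ε₀^α` for all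
`ε₀ ∈ (0,δ)`; and (ii) `lim_{ε₀→0⁺} b_{ε₀}/ε₀ = lim_{x→x₀⁺} 1/T'(x)`. -/
theorem statement18 (T : ℝ → ℝ) (x₀ α D : ℝ) (hPM : PMHyp T x₀ α)
    (hD : Tendsto (deriv T) (𝓝[>] x₀) (𝓝 D)) (hD1 : 1 ≤ D) :
    (∃ k₁ k₂ δ : ℝ, 0 < k₁ ∧ k₁ ≤ k₂ ∧ 0 < δ ∧
      ∀ e ∈ Set.Ioo (0:ℝ) δ, ∀ y ∈ Set.Ioo (0:ℝ) x₀, T y = e →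
        k₁ * e ^ α ≤ (e - y) / e ∧ (e - y) / e ≤ k₂ * e ^ α) ∧
    Tendsto
      (fun e => ((volume (Set.Ioc e 1 ∩ T ⁻¹' (Set.Icc 0 e))).toReal / (1 - e)) / e)
      (𝓝[>] (0:ℝ)) (𝓝 D⁻¹) := by
  obtain ⟨c, hc, hderiv⟩ := hPM.exists_tendsto_deriv_sub_one_div_rpow
  exact (statement18_general hPM.αmem.1 hPM.x₀mem hPM.branch1 hPM.branch2
    (fun x hx => hPM.expand x (.inl hx)) (fun x hx => zero_lt_one.trans (hPM.expand x (.inr hx)))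
    hderiv hD (zero_lt_one.trans_le hD1).ne').imp_left
      (exists_rpow_bounds_of_tendsto_escapeProb hPM.branch1.injOn hc)
end
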